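/- Let α ∈ RO and let p ≥ 0 be an integer. If H^α(ℝⁿ) embeds continuously into C^p_b(ℝⁿ), then ∫₁^∞ t^{2p+n−1} α(t)^{−2} dt < ∞. -/

import Mathlib

open MeasureTheory FourierTransform

/-- The class RO of RO-varying functions at infinity. -/
def RO (α : ℝ → ℝ) : Prop :=
  Measurable α ∧ (∀ t ≥ (1:ℝ), 0 < α t) ∧
    ∃ b > (1:ℝ), ∃ c ≥ (1:ℝ), ∀ t ≥ (1:ℝ), ∀ l ∈ Set.Icc (1:ℝ) b,
      c⁻¹ ≤ α (l * t) / α t ∧ α (l * t) / α t ≤ c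

/-- The Hörmander weight `ξ ↦ α(⟨ξ⟩)`. -/
noncomputable def wt (α : ℝ → ℝ) {n : ℕ} (ξ : EuclideanSpace ℝ (Fin n)) : ℝ :=
  α (Real.sqrt (1 + ‖ξ‖ ^ 2))

/-!
Evaluating the `p`-th derivative of `𝓕⁻ W` at the origin in a direction `e` pairs `W` with
`ξ ↦ ⟪ξ, e⟫ ^ p`, up to a constant of modulus at least one. The embedding bounds this pairing by the
`L²(α(⟨ξ⟩)² dξ)` norm of `W`; testing it on truncations of the Cauchy–Schwarz extremizer
`⟪ξ, e⟫ ^ p α(⟨ξ⟩)⁻²` gives `∫ ⟪ξ, e⟫ ^ (2p) α(⟨ξ⟩)⁻² dξ < ∞`. Summing over an orthonormal basis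
replaces `⟪ξ, e⟫` by `‖ξ‖`, and polar coordinates with the substitution `t = √(1 + r²)` turn the
result into the integral of `t ^ (2p + n - 1) α(t)⁻²` away from `t = 1`. Near `t = 1` the
RO condition bounds `α` from below.
-/

lemma le_sq_of_le_mul_sqrt {x C : ℝ} (h : x ≤ C * √x) : x ≤ C ^ 2 := by
  rcases le_or_gt x 0 with hx | hx
  · exact hx.trans (sq_nonneg C)
  · have hsqrt : √x ≤ C := by
      refine le_of_mul_le_mul_right ?_ (Real.sqrt_pos.2 hx)
      rwa [Real.mul_self_sqrt hx.le]
    exact Real.sqrt_le_left (Real.sqrt_nonneg x |>.trans hsqrt) |>.1 hsqrt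

lemma aecover_setOf_norm_le {X F : Type*} [MeasurableSpace X] {μ : Measure X}
    [NormedAddCommGroup F] [MeasurableSpace F] [OpensMeasurableSpace F] {f : X → F}
    (hf : Measurable f) : AECover μ Filter.atTop fun N : ℕ => {x | ‖f x‖ ≤ N} where
  ae_eventually_mem := ae_of_all _ fun x =>
    tendsto_natCast_atTop_atTop.eventually_ge_atTop ‖f x‖
  measurableSet _ := measurableSet_le hf.norm measurable_const

lemma integrable_norm_pow_mul_norm {E F : Type*} [NormedAddCommGroup E] [MeasurableSpace E]
    [BorelSpace E] {μ : Measure E} [IsFiniteMeasureOnCompacts μ] [NormedAddCommGroup F]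
    {W : E → F} (hW : AEStronglyMeasurable W μ) {K : ℝ} (hK : ∀ ξ, ‖W ξ‖ ≤ K)
    (hsupp : HasCompactSupport W) (k : ℕ) : Integrable (fun ξ => ‖ξ‖ ^ k * ‖W ξ‖) μ := by
  have hW_on : IntegrableOn W (tsupport W) μ :=
    .of_bound hsupp.measure_lt_top hW.restrict K (ae_of_all _ hK)
  rw [← integrableOn_iff_integrable_of_support_subset (s := tsupport W)
    fun ξ hξ => subset_tsupport W (norm_ne_zero_iff.1 (right_ne_zero_of_mul hξ))]
  exact IntegrableOn.continuousOn_mul (g' := fun ξ => ‖W ξ‖) (by fun_prop) hW_on.norm hsupp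

lemma sq_mul_indicator_sq {X : Type*} {g w : X → ℝ} (hw_pos : ∀ ξ, 0 < w ξ) (S : Set X) :
    (fun ξ => w ξ ^ 2 * S.indicator (fun η => g η * (w η)⁻¹ ^ 2) ξ ^ 2) =
      S.indicator fun ξ => g ξ ^ 2 * (w ξ)⁻¹ ^ 2 := by
  ext ξ
  by_cases hξ : ξ ∈ S
  · have := (hw_pos ξ).ne'
    simp only [hξ, Set.indicator_of_mem]
    field_simp
  · simp [hξ]

lemma setIntegral_sq_mul_inv_sq_le {X : Type*} [MeasurableSpace X] {μ : Measure X} {g w : X → ℝ}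
    (hw_pos : ∀ ξ, 0 < w ξ) {S : Set X} (hS : MeasurableSet S) {C : ℝ}
    (hC : ∫ ξ, g ξ * S.indicator (fun η => g η * (w η)⁻¹ ^ 2) ξ ∂μ ≤
      C * √(∫ ξ, w ξ ^ 2 * S.indicator (fun η => g η * (w η)⁻¹ ^ 2) ξ ^ 2 ∂μ)) :
    ∫ ξ in S, g ξ ^ 2 * (w ξ)⁻¹ ^ 2 ∂μ ≤ C ^ 2 := by
  have hpairing : (fun ξ => g ξ * S.indicator (fun η => g η * (w η)⁻¹ ^ 2) ξ) =
      S.indicator fun ξ => g ξ ^ 2 * (w ξ)⁻¹ ^ 2 := by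
    simp only [← Set.indicator_mul_right, ← mul_assoc, sq (g _)]
  rw [hpairing, sq_mul_indicator_sq hw_pos, integral_indicator hS] at hC
  exact le_sq_of_le_mul_sqrt hC

theorem integrable_sq_mul_inv_sq_of_forall_integral_mul_le {E : Type*}
    [NormedAddCommGroup E] [ProperSpace E] [MeasurableSpace E] [BorelSpace E] {μ : Measure E}
    [IsFiniteMeasureOnCompacts μ] {g w : E → ℝ} (hg : Measurable g) (hw : Measurable w)
    (hw_pos : ∀ ξ, 0 < w ξ) {C : ℝ}
    (hC : ∀ W : E → ℝ, Measurable W → (∃ K, ∀ ξ, ‖W ξ‖ ≤ K) → HasCompactSupport W →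
      Integrable (fun ξ => w ξ ^ 2 * W ξ ^ 2) μ →
        ∫ ξ, g ξ * W ξ ∂μ ≤ C * √(∫ ξ, w ξ ^ 2 * W ξ ^ 2 ∂μ)) :
    Integrable (fun ξ => g ξ ^ 2 * (w ξ)⁻¹ ^ 2) μ := by
  let h : E → ℝ := fun ξ => g ξ ^ 2 * (w ξ)⁻¹ ^ 2
  let r : E → ℝ := fun ξ => g ξ * (w ξ)⁻¹ ^ 2
  let S : ℕ → Set E := fun N => {ξ | ‖(ξ, h ξ, r ξ)‖ ≤ N}
  have hh : Measurable h := by fun_prop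
  have hr : Measurable r := by fun_prop
  have hcover : AECover μ Filter.atTop S :=
    aecover_setOf_norm_le (measurable_id.prodMk (hh.prodMk hr))
  have mem_S {N : ℕ} {ξ : E} : ξ ∈ S N ↔ ‖ξ‖ ≤ N ∧ ‖h ξ‖ ≤ N ∧ ‖r ξ‖ ≤ N := by
    simp only [S, Set.mem_ofPred_eq, Prod.norm_mk, sup_le_iff]
  have hS_subset (N : ℕ) : S N ⊆ Metric.closedBall 0 N := fun ξ hξ =>
    mem_closedBall_zero_iff.2 (mem_S.1 hξ).1
  have h_int (N : ℕ) : IntegrableOn h (S N) μ :=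
    .of_bound ((measure_mono (hS_subset N)).trans_lt (isCompact_closedBall 0 _).measure_lt_top)
      hh.aestronglyMeasurable N
      (ae_restrict_of_forall_mem (hcover.measurableSet N) fun ξ hξ => (mem_S.1 hξ).2.1)
  refine hcover.integrable_of_integral_bounded_of_nonneg_ae (C ^ 2) h_int
    (ae_of_all _ fun ξ => by positivity)
    (.of_forall fun N => setIntegral_sq_mul_inv_sq_le hw_pos (hcover.measurableSet N) ?_)
  refine hC _ (hr.indicator (hcover.measurableSet N)) ⟨N, fun ξ => ?_⟩
    (.of_support_subset_isCompact (isCompact_closedBall 0 _)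
      (Set.support_indicator_subset.trans (hS_subset N))) ?_
  · rw [norm_indicator_eq_indicator_norm]
    exact Set.indicator_le' (fun ξ hξ => (mem_S.1 hξ).2.2) (fun _ _ => N.cast_nonneg) ξ
  · rw [sq_mul_indicator_sq hw_pos]
    exact (h_int N).integrable_indicator (hcover.measurableSet N)

section Fourier

variable {E F : Type*} [NormedAddCommGroup E] [InnerProductSpace ℝ E] [FiniteDimensional ℝ E]
  [MeasurableSpace E] [BorelSpace E] [NormedAddCommGroup F] [NormedSpace ℂ F]

lemma iteratedFDeriv_fourierInv_zero_apply {p : ℕ} {W : E → F}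
    (hW : AEStronglyMeasurable W) (hint : ∀ k ≤ p, Integrable fun v => ‖v‖ ^ k * ‖W v‖)
    (m : Fin p → E) :
    iteratedFDeriv ℝ p (𝓕⁻ W) 0 m =
      (2 * Real.pi * Complex.I) ^ p • ∫ v, (∏ i, inner ℝ v (m i)) • W v := by
  have hfourier : 𝓕⁻ W =
      VectorFourier.fourierIntegral Real.fourierChar volume (-innerSL ℝ).toLinearMap₁₂ W := by
    ext x
    simp [Real.fourierInv_eq, VectorFourier.fourierIntegral]
  have hprod (v : E) : ∏ i, (-innerSL ℝ) v (m i) = (-1) ^ p * ∏ i, inner ℝ v (m i) := by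
    simp [Finset.prod_neg]
  rw [hfourier, VectorFourier.iteratedFDeriv_fourierIntegral (-innerSL ℝ) (N := p)
    (fun k hk => hint k (by exact_mod_cast hk)) hW le_rfl]
  simp only [VectorFourier.fourierIntegral, map_zero, neg_zero, AddChar.map_zero_eq_one, one_smul]
  rw [ContinuousMultilinearMap.integral_apply
    (VectorFourier.integrable_fourierPowSMulRight _ (hint p le_rfl) hW)]
  simp only [VectorFourier.fourierPowSMulRight_apply, hprod, mul_smul]
  rw [integral_smul, integral_smul]
  rcases p.even_or_odd with hp | hp <;> simp [hp.neg_pow]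

lemma norm_integral_inner_pow_smul_le {p : ℕ} {W : E → F} (hW : AEStronglyMeasurable W)
    (hint : ∀ k ≤ p, Integrable fun v => ‖v‖ ^ k * ‖W v‖) (e : E) :
    ‖∫ v, inner ℝ v e ^ p • W v‖ ≤ ‖iteratedFDeriv ℝ p (𝓕⁻ W) 0‖ * ‖e‖ ^ p := by
  have happly := iteratedFDeriv_fourierInv_zero_apply hW hint fun _ => e
  have hle := (iteratedFDeriv ℝ p (𝓕⁻ W) 0).le_opNorm fun _ => e
  simp only [Finset.prod_const, Finset.card_univ, Fintype.card_fin] at happly hle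
  rw [happly, norm_smul] at hle
  refine (le_mul_of_one_le_left (norm_nonneg _) ?_).trans hle
  have hnorm : ‖(2 * Real.pi * Complex.I : ℂ)‖ = 2 * Real.pi := by simp [abs_of_pos Real.pi_pos]
  rw [norm_pow, hnorm]
  exact one_le_pow₀ (by linarith [Real.pi_gt_three])

end Fourier

lemma norm_pow_two_mul_le_sum_inner_pow {ι E : Type*} [Fintype ι] [Nonempty ι]
    [NormedAddCommGroup E] [InnerProductSpace ℝ E] (b : OrthonormalBasis ι ℝ E) (p : ℕ) (v : E) :
    ‖v‖ ^ (2 * p) ≤ (Fintype.card ι : ℝ) ^ (p - 1) * ∑ i, inner ℝ v (b i) ^ (2 * p) := by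
  have hsq : ‖v‖ ^ 2 = ∑ i, inner ℝ v (b i) ^ 2 := by
    simp only [← b.sum_sq_norm_inner_left v, Real.norm_eq_abs, sq_abs]
  simp only [pow_mul, hsq]
  cases p with
  | zero => simpa using Nat.succ_le_of_lt (Fintype.card_pos (α := ι))
  | succ p => exact pow_sum_le_card_mul_sum_pow (fun i _ => sq_nonneg _) p

section DerivBound

variable {E : Type*} [NormedAddCommGroup E] [InnerProductSpace ℝ E] [FiniteDimensional ℝ E]
  [MeasurableSpace E] [BorelSpace E]

/-- The bound `‖D^p u(0)‖ ≤ C ‖u‖` for the inverse Fourier transform `u = 𝓕⁻ W` in the space with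
norm `‖w W‖_{L²}`: the part of an embedding of this space into `C^p_b` that determines the decay of
the weight `w`. Evaluating at `0` loses nothing, since translating `u` multiplies `W` by a
unimodular character. -/
def DerivBoundAtZero (w : E → ℝ) (p : ℕ) (C : ℝ) : Prop :=
  ∀ W : E → ℂ, Measurable W → Integrable W → Integrable (fun ξ => w ξ ^ 2 * ‖W ξ‖ ^ 2) →
    ‖iteratedFDeriv ℝ p (𝓕⁻ W) 0‖ ≤ C * √(∫ ξ, w ξ ^ 2 * ‖W ξ‖ ^ 2)

variable {w : E → ℝ} {p : ℕ} {C : ℝ}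

lemma DerivBoundAtZero.integrable_inner_pow (hC : DerivBoundAtZero w p C) (hw : Measurable w)
    (hw_pos : ∀ ξ, 0 < w ξ) (e : E) :
    Integrable fun ξ => inner ℝ ξ e ^ (2 * p) * (w ξ)⁻¹ ^ 2 := by
  simp only [mul_comm 2 p, pow_mul]
  refine integrable_sq_mul_inv_sq_of_forall_integral_mul_le (C := C * ‖e‖ ^ p) (by fun_prop) hw
    hw_pos ?_
  intro W hW ⟨K, hK⟩ hsupp hW_sq
  let V : E → ℂ := fun ξ => W ξ
  have hV_norm (ξ : E) : ‖V ξ‖ = ‖W ξ‖ := Complex.norm_real _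
  have hV : Measurable V := by fun_prop
  have hmoment (k : ℕ) : Integrable fun ξ => ‖ξ‖ ^ k * ‖V ξ‖ := by
    simpa only [hV_norm] using integrable_norm_pow_mul_norm hW.aestronglyMeasurable hK hsupp k
  have hV_int : Integrable V := by
    simpa [integrable_norm_iff hV.aestronglyMeasurable] using hmoment 0
  have hV_sq : (fun ξ => w ξ ^ 2 * ‖V ξ‖ ^ 2) = fun ξ => w ξ ^ 2 * W ξ ^ 2 := by
    simp only [hV_norm, Real.norm_eq_abs, sq_abs]
  have hderiv := hC V hV hV_int (by rwa [hV_sq])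
  rw [hV_sq] at hderiv
  have hpairing : ∫ ξ, inner ℝ ξ e ^ p • V ξ = (∫ ξ, inner ℝ ξ e ^ p * W ξ : ℝ) := by
    simp only [V, Complex.real_smul, ← Complex.ofReal_mul, integral_complex_ofReal]
  calc ∫ ξ, inner ℝ ξ e ^ p * W ξ ≤ ‖∫ ξ, inner ℝ ξ e ^ p • V ξ‖ := by
        rw [hpairing, Complex.norm_real]
        exact le_abs_self _
    _ ≤ ‖iteratedFDeriv ℝ p (𝓕⁻ V) 0‖ * ‖e‖ ^ p :=
        norm_integral_inner_pow_smul_le hV.aestronglyMeasurable (fun k _ => hmoment k) e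
    _ ≤ C * √(∫ ξ, w ξ ^ 2 * W ξ ^ 2) * ‖e‖ ^ p := by gcongr
    _ = C * ‖e‖ ^ p * √(∫ ξ, w ξ ^ 2 * W ξ ^ 2) := by ring

theorem DerivBoundAtZero.integrable_norm_pow [Nontrivial E] (hC : DerivBoundAtZero w p C)
    (hw : Measurable w) (hw_pos : ∀ ξ, 0 < w ξ) :
    Integrable fun ξ => ‖ξ‖ ^ (2 * p) * (w ξ)⁻¹ ^ 2 := by
  let b := stdOrthonormalBasis ℝ E
  have : Nonempty (Fin (Module.finrank ℝ E)) := b.toBasis.index_nonempty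
  have hcoord := integrable_finsetSum Finset.univ fun i _ =>
    hC.integrable_inner_pow hw hw_pos (b i)
  refine (hcoord.const_mul (Fintype.card (Fin (Module.finrank ℝ E)) ^ (p - 1))).mono' (by fun_prop)
    (ae_of_all _ fun ξ => ?_)
  rw [Real.norm_of_nonneg (by positivity), ← Finset.sum_mul, ← mul_assoc]
  gcongr
  exact norm_pow_two_mul_le_sum_inner_pow b p ξ

end DerivBound

lemma hasDerivAt_sqrt_one_add_sq (r : ℝ) :
    HasDerivAt (fun r : ℝ => √(1 + r ^ 2)) (r / √(1 + r ^ 2)) r := by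
  have h := ((hasDerivAt_pow 2 r).const_add 1).sqrt (by positivity)
  convert h using 1
  push_cast
  field_simp

lemma injOn_sqrt_one_add_sq : Set.InjOn (fun r : ℝ => √(1 + r ^ 2)) (Set.Ioi 1) := by
  refine StrictMonoOn.injOn fun r (hr : 1 < r) s _ hrs => ?_
  exact Real.sqrt_lt_sqrt (by positivity) (by gcongr)

lemma Ici_two_subset_image_sqrt_one_add_sq :
    Set.Ici 2 ⊆ (fun r : ℝ => √(1 + r ^ 2)) '' Set.Ioi 1 := by
  intro s (hs : 2 ≤ s)
  refine ⟨√(s ^ 2 - 1), Real.lt_sqrt_of_sq_lt (by nlinarith), ?_⟩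
  simp only
  rw [Real.sq_sqrt (by nlinarith), add_sub_cancel, Real.sqrt_sq (by linarith)]

lemma integrableOn_Ici_two_of_comp_sqrt_one_add_sq {β : ℝ → ℝ} (m : ℕ)
    (h : IntegrableOn (fun r => r ^ m * β √(1 + r ^ 2)) (Set.Ioi 1)) :
    IntegrableOn (fun s => s ^ m * β s) (Set.Ici 2) := by
  refine IntegrableOn.mono_set ?_ Ici_two_subset_image_sqrt_one_add_sq
  rw [integrableOn_image_iff_integrableOn_abs_deriv_smul measurableSet_Ioi
    (fun r _ => (hasDerivAt_sqrt_one_add_sq r).hasDerivWithinAt) injOn_sqrt_one_add_sq]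
  have hfactor : ∀ r ∈ Set.Ioi (1 : ℝ), ‖r / √(1 + r ^ 2) * (√(1 + r ^ 2) / r) ^ m‖ ≤ 2 ^ m := by
    intro r (hr : 1 < r)
    have hr_pos : 0 < r := by linarith
    have hle_one : r / √(1 + r ^ 2) ≤ 1 :=
      (div_le_one (by positivity)).2 (Real.le_sqrt_of_sq_le (by linarith))
    have hle_two : √(1 + r ^ 2) / r ≤ 2 :=
      (div_le_iff₀ hr_pos).2 (Real.sqrt_le_iff.2 ⟨by linarith, by nlinarith⟩)
    rw [Real.norm_of_nonneg (by positivity), ← one_mul (2 ^ m)]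
    gcongr
  refine IntegrableOn.congr_fun (h.bdd_mul (by fun_prop)
    (ae_restrict_of_forall_mem measurableSet_Ioi hfactor)) (fun r (hr : 1 < r) => ?_)
    measurableSet_Ioi
  have : 0 < r := by linarith
  simp only [smul_eq_mul, div_pow]
  rw [abs_of_pos (by positivity)]
  field_simp

theorem RO.exists_pos_forall_le {α : ℝ → ℝ} (hα : RO α) (R : ℝ) :
    ∃ m > 0, ∀ t ∈ Set.Icc 1 R, m ≤ α t := by
  obtain ⟨-, hpos, b, hb, c, hc, hratio⟩ := hα
  have hgeom (k : ℕ) : ∃ m > 0, ∀ t ∈ Set.Icc 1 (b ^ k), m ≤ α t := by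
    induction k with
    | zero =>
      refine ⟨α 1, hpos 1 le_rfl, fun t ht => ?_⟩
      rw [le_antisymm (by simpa using ht.2) ht.1]
    | succ k ih =>
      obtain ⟨m, hm, hle⟩ := ih
      refine ⟨c⁻¹ * m, by positivity, fun t ⟨ht_one, ht_le⟩ => ?_⟩
      let s := max 1 (t / b)
      have hs_pos : 0 < s := by positivity
      have hs_mem : s ∈ Set.Icc 1 (b ^ k) :=
        ⟨le_max_left _ _, max_le (one_le_pow₀ hb.le) ((div_le_iff₀ (by positivity)).2 ht_le)⟩
      have hquot : t / s ∈ Set.Icc 1 b :=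
        ⟨(one_le_div hs_pos).2 (max_le ht_one (div_le_self (by positivity) hb.le)),
          div_le_comm₀ (by positivity) hs_pos |>.1 (le_max_right _ _)⟩
      have hstep := (hratio s hs_mem.1 _ hquot).1
      rw [div_mul_cancel₀ _ hs_pos.ne', le_div_iff₀ (hpos s hs_mem.1)] at hstep
      exact (mul_le_mul_of_nonneg_left (hle s hs_mem) (by positivity)).trans hstep
  obtain ⟨k, hk⟩ := pow_unbounded_of_one_lt R hb
  obtain ⟨m, hm, hle⟩ := hgeom k
  exact ⟨m, hm, fun t ht => hle t ⟨ht.1, ht.2.trans hk.le⟩⟩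

lemma RO.integrableOn_inv_sq {α : ℝ → ℝ} (hα : RO α) (R : ℝ) :
    IntegrableOn (fun t => (α t)⁻¹ ^ 2) (Set.Icc 1 R) := by
  obtain ⟨m, hm, hle⟩ := hα.exists_pos_forall_le R
  have hα_meas := hα.1
  refine .of_bound (by simp) (by fun_prop) (m⁻¹ ^ 2)
    (ae_restrict_of_forall_mem measurableSet_Icc fun t ht => ?_)
  have hα_pos := hα.2.1 t ht.1
  rw [Real.norm_of_nonneg (by positivity)]
  gcongr
  exact hle t ht

theorem hormander_embedding_Cp_converse_general {E : Type*} [NormedAddCommGroup E]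
    [InnerProductSpace ℝ E] [FiniteDimensional ℝ E] [Nontrivial E] [MeasurableSpace E]
    [BorelSpace E] {p : ℕ} {C : ℝ} {α : ℝ → ℝ} (hα : Measurable α) (hα_pos : ∀ t ≥ 1, 0 < α t)
    (hα_inv : IntegrableOn (fun t => (α t)⁻¹ ^ 2) (Set.Icc 1 2))
    (hC : DerivBoundAtZero (fun ξ : E => α √(1 + ‖ξ‖ ^ 2)) p C) :
    IntegrableOn (fun t : ℝ => t ^ (2 * (p : ℝ) + Module.finrank ℝ E - 1) * (α t)⁻¹ ^ 2)
      (Set.Ici 1) := by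
  set m := Module.finrank ℝ E - 1 + 2 * p with hm
  have hspace := hC.integrable_norm_pow (by fun_prop)
    fun ξ => hα_pos _ (Real.one_le_sqrt.2 (by nlinarith [sq_nonneg ‖ξ‖]))
  have hradial := (integrable_fun_norm_addHaar (volume : Measure E)
    (f := fun r => r ^ (2 * p) * (α √(1 + r ^ 2))⁻¹ ^ 2)).1 hspace
  simp only [smul_eq_mul, ← mul_assoc, ← pow_add, ← hm] at hradial
  have htail : IntegrableOn (fun t => t ^ m * (α t)⁻¹ ^ 2) (Set.Ici 2) :=
    integrableOn_Ici_two_of_comp_sqrt_one_add_sq (β := fun t => (α t)⁻¹ ^ 2) m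
      (hradial.mono_set (Set.Ioi_subset_Ioi zero_le_one))
  have hhead : IntegrableOn (fun t => t ^ m * (α t)⁻¹ ^ 2) (Set.Icc 1 2) :=
    hα_inv.continuousOn_mul (by fun_prop) isCompact_Icc
  have hexp : (m : ℝ) = 2 * (p : ℝ) + Module.finrank ℝ E - 1 := by
    rw [hm, Nat.cast_add, Nat.cast_pred Module.finrank_pos]
    push_cast
    ring
  simp only [← hexp, Real.rpow_natCast]
  rw [← Set.Icc_union_Ici_eq_Ici one_le_two]
  exact hhead.union htail

/-- converse to Hörmander's embedding theorem. If `H^α(ℝⁿ)` embeds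
continuously into `C^p_b(ℝⁿ)` (on the Fourier side: the `C^p`-seminorms of `w = 𝓕⁻ W` are
uniformly controlled by the `H^α` norm), then `∫₁^∞ t^{2p+n−1} α(t)^{−2} dt < ∞`. -/
theorem hormander_embedding_Cp_converse (n p : ℕ) (hn : 0 < n) (α : ℝ → ℝ) (hα : RO α)
    (hemb : ∃ C > (0:ℝ), ∀ W : EuclideanSpace ℝ (Fin n) → ℂ, Measurable W →
      Integrable W → Integrable (fun ξ => (wt α ξ) ^ 2 * ‖W ξ‖ ^ 2) →
        ∀ k ≤ p, ∀ x : EuclideanSpace ℝ (Fin n),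
          ‖iteratedFDeriv ℝ k (𝓕⁻ W) x‖ ≤
            C * Real.sqrt (∫ ξ, (wt α ξ) ^ 2 * ‖W ξ‖ ^ 2)) :
    IntegrableOn
      (fun t : ℝ => t ^ (2 * (p:ℝ) + n - 1) * ((α t)⁻¹) ^ 2) (Set.Ici 1) := by
  have : NeZero n := ⟨hn.ne'⟩
  obtain ⟨C, -, hC⟩ := hemb
  simpa using hormander_embedding_Cp_converse_general (E := EuclideanSpace ℝ (Fin n)) hα.1 hα.2.1
    (hα.integrableOn_inv_sq 2) fun W hW hW_int hW_sq => hC W hW hW_int hW_sq p le_rfl 0
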